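/- Let u ∈ 𝒰_Ω, let [c, d] be the orthogonal projection of Ω onto the y-axis, and for y ∈ [c, d] let m(y) = max{u(x, y) : (x, y) ∈ Ω}. Then ‖u_x‖₁ = ∫_c^d 2 m(y) dy. -/

import Mathlib

open Set MeasureTheory
open scoped ENNReal

/-- Partial derivative of `u` in the `x` direction (junk value where `u` is not
differentiable). -/
noncomputable def ux (u : ℝ × ℝ → ℝ) (z : ℝ × ℝ) : ℝ := fderiv ℝ u z (1, 0)

/-- Partial derivative of `u` in the `y` direction. -/
noncomputable def uy (u : ℝ × ℝ → ℝ) (z : ℝ × ℝ) : ℝ := fderiv ℝ u z (0, 1)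

/-- Directional derivative of `u` in the direction `h`. -/
noncomputable def uh (h : ℝ × ℝ) (u : ℝ × ℝ → ℝ) (z : ℝ × ℝ) : ℝ := fderiv ℝ u z h

/-- The class `𝒰_Ω`: continuous concave functions on `Ω` vanishing on the boundary,
with uniformly bounded gradient over all interior points where it exists. -/
def MemU (Ω : Set (ℝ × ℝ)) (u : ℝ × ℝ → ℝ) : Prop :=
  ContinuousOn u Ω ∧ ConcaveOn ℝ Ω u ∧ (∀ z ∈ frontier Ω, u z = 0) ∧
    ∃ C : ℝ, ∀ z ∈ interior Ω, ∀ g : (ℝ × ℝ) →L[ℝ] ℝ, HasFDerivAt u g z → ‖g‖ ≤ C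

/-- The `L¹` norm of `f` over `Ω`. -/
noncomputable def L1N (Ω : Set (ℝ × ℝ)) (f : ℝ × ℝ → ℝ) : ℝ := ∫ z in Ω, |f z|

/-- The `L^p` norm of `f` over `Ω`, `p ∈ [1, ∞)`. -/
noncomputable def LpN (Ω : Set (ℝ × ℝ)) (p : ℝ) (f : ℝ × ℝ → ℝ) : ℝ :=
  (∫ z in Ω, |f z| ^ p) ^ (1 / p)

/-- The `L^∞` norm (essential supremum) of `f` over `Ω`. -/
noncomputable def LinfN (Ω : Set (ℝ × ℝ)) (f : ℝ × ℝ → ℝ) : ℝ≥0∞ :=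
  essSup (fun z => ENNReal.ofReal |f z|) (volume.restrict Ω)

/-- The width of `Ω` parallel to the (Euclidean unit) vector `h`: the distance between the
two lines of support of `Ω` parallel to `h`, i.e. the oscillation over `Ω` of the linear
functional given by the unit normal `(-h.2, h.1)` to `h`. -/
noncomputable def widthPar (Ω : Set (ℝ × ℝ)) (h : ℝ × ℝ) : ℝ :=
  sSup ((fun z : ℝ × ℝ => -h.2 * z.1 + h.1 * z.2) '' Ω) -
    sInf ((fun z : ℝ × ℝ => -h.2 * z.1 + h.1 * z.2) '' Ω)

/-!
On a line, the total variation of a continuous concave function on `[a, b]` with maximum `M` is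
`2 M - f a - f b`: the function increases up to a maximum point and decreases afterwards. For `u`
concave on a convex body and zero on its boundary, every horizontal section is such a function with
zero boundary values, so integrating `2 m(y)` over `y` gives `‖u_x‖₁` by Fubini. Integrability of
`u_x` comes out of Tonelli's theorem, since the integrals over the sections are bounded by
`2 max u`. Classical partial derivatives suffice because a concave function is differentiable almost
everywhere, by Rademacher's theorem.
-/

section OneVariable

section Monotone

variable {𝕜 β : Type*} [Field 𝕜] [LinearOrder 𝕜] [IsStrictOrderedRing 𝕜]
  [AddCommGroup β] [LinearOrder β] [IsOrderedAddMonoid β] [Module 𝕜 β] [IsStrictOrderedModule 𝕜 β]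
  {s : Set 𝕜} {f : 𝕜 → β} {x₀ : 𝕜}

theorem monotoneOn_inter_Iic_of_concaveOn_of_isMaxOn (hf : ConcaveOn 𝕜 s f) (hx₀ : x₀ ∈ s)
    (hmax : IsMaxOn f s x₀) : MonotoneOn f (s ∩ Iic x₀) := fun x hx y hy hxy => by
  simpa only [min_eq_left (hmax hx.1)] using hf.min_le_of_mem_Icc hx.1 hx₀ ⟨hxy, hy.2⟩

theorem antitoneOn_inter_Ici_of_concaveOn_of_isMaxOn (hf : ConcaveOn 𝕜 s f) (hx₀ : x₀ ∈ s)
    (hmax : IsMaxOn f s x₀) : AntitoneOn f (s ∩ Ici x₀) := fun x hx y hy hxy => by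
  simpa only [min_eq_right (hmax hy.1)] using hf.min_le_of_mem_Icc hx₀ hy.1 ⟨hx.2, hxy⟩

end Monotone

variable {f : ℝ → ℝ} {a b x₀ : ℝ}

theorem differentiableWithinAt_Ioi_of_concaveOn {s : Set ℝ} {x : ℝ} (hf : ConcaveOn ℝ s f)
    (hx : x ∈ interior s) : DifferentiableWithinAt ℝ f (Ioi x) x := by
  simpa only [neg_neg] using (hf.neg.differentiableWithinAt_Ioi_of_mem_interior hx).neg

-- Right differentiability at every interior point is what rules out Cantor-type functions.
theorem integral_abs_deriv_of_monotoneOn (hab : a ≤ b) (hcont : ContinuousOn f (Icc a b))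
    (hmono : MonotoneOn f (Icc a b))
    (hright : ∀ x ∈ Ioo a b, DifferentiableWithinAt ℝ f (Ioi x) x) :
    ∫ x in a..b, |deriv f x| = f b - f a := by
  have hint : IntervalIntegrable (deriv f) volume a b :=
    MonotoneOn.intervalIntegrable_deriv (by rwa [uIcc_of_le hab])
  have hderiv : ∀ᵐ x, x ∈ uIoc a b → |deriv f x| = derivWithin f (Ioi x) x := by
    filter_upwards [hmono.ae_differentiableWithinAt_of_mem, Measure.ae_ne volume b]
      with x hx hxb hxI
    rw [uIoc_of_le hab] at hxI
    have hnhds : Icc a b ∈ nhds x := Icc_mem_nhds hxI.1 (hxI.2.lt_of_ne hxb)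
    have hnonneg : 0 ≤ deriv f x :=
      hmono.derivWithin_nonneg.trans_eq (derivWithin_of_mem_nhds hnhds)
    have hdiff : DifferentiableAt ℝ f x := (hx (Ioc_subset_Icc_self hxI)).differentiableAt hnhds
    rw [abs_of_nonneg hnonneg, hdiff.derivWithin (uniqueDiffWithinAt_Ioi x)]
  calc ∫ x in a..b, |deriv f x| = ∫ x in a..b, derivWithin f (Ioi x) x :=
        intervalIntegral.integral_congr_ae hderiv
    _ = f b - f a := intervalIntegral.integral_eq_sub_of_hasDeriv_right_of_le hab hcont
        (fun x hx => (hright x hx).hasDerivWithinAt)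
        (hint.abs.congr_ae ((ae_restrict_iff' measurableSet_uIoc).2 hderiv))

theorem integral_abs_deriv_of_concaveOn (hf : ConcaveOn ℝ (Icc a b) f)
    (hcont : ContinuousOn f (Icc a b)) (hx₀ : x₀ ∈ Icc a b) (hmax : IsMaxOn f (Icc a b) x₀) :
    IntervalIntegrable (fun x => |deriv f x|) volume a b ∧
      ∫ x in a..b, |deriv f x| = 2 * f x₀ - f a - f b := by
  have hright : ∀ x ∈ Ioo a b, DifferentiableWithinAt ℝ f (Ioi x) x := fun x hx =>
    differentiableWithinAt_Ioi_of_concaveOn hf (by rwa [interior_Icc])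
  have hmono : MonotoneOn f (Icc a x₀) :=
    (monotoneOn_inter_Iic_of_concaveOn_of_isMaxOn hf hx₀ hmax).mono fun x hx =>
      ⟨⟨hx.1, hx.2.trans hx₀.2⟩, hx.2⟩
  have hanti : MonotoneOn (-f) (Icc x₀ b) :=
    ((antitoneOn_inter_Ici_of_concaveOn_of_isMaxOn hf hx₀ hmax).mono fun x hx =>
      ⟨⟨hx₀.1.trans hx.1, hx.2⟩, hx.1⟩).neg
  have hintl : IntervalIntegrable (fun x => |deriv f x|) volume a x₀ :=
    (MonotoneOn.intervalIntegrable_deriv (by rwa [uIcc_of_le hx₀.1])).abs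
  have hintr : IntervalIntegrable (fun x => |deriv f x|) volume x₀ b := by
    simpa only [deriv.neg', abs_neg] using
      (MonotoneOn.intervalIntegrable_deriv (f := -f) (by rwa [uIcc_of_le hx₀.2])).abs
  have hleft : ∫ x in a..x₀, |deriv f x| = f x₀ - f a :=
    integral_abs_deriv_of_monotoneOn hx₀.1 (hcont.mono (Icc_subset_Icc_right hx₀.2)) hmono
      fun x hx => hright x ⟨hx.1, hx.2.trans_le hx₀.2⟩
  have hright' : ∫ x in x₀..b, |deriv f x| = f x₀ - f b := by
    have h := integral_abs_deriv_of_monotoneOn hx₀.2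
      (hcont.mono (Icc_subset_Icc_left hx₀.1)).neg hanti
      fun x hx => (hright x ⟨hx₀.1.trans_lt hx.1, hx.2⟩).neg
    simpa only [deriv.neg', abs_neg, Pi.neg_apply, neg_sub_neg] using h
  refine ⟨hintl.trans hintr, ?_⟩
  rw [← intervalIntegral.integral_add_adjacent_intervals hintl hintr, hleft, hright']
  ring

end OneVariable

section Rademacher

variable {E F : Type*} [NormedAddCommGroup E] [NormedSpace ℝ E] [FiniteDimensional ℝ E]
  [MeasurableSpace E] [BorelSpace E] (μ : Measure E) [μ.IsAddHaarMeasure]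
  [NormedAddCommGroup F] [NormedSpace ℝ F] [FiniteDimensional ℝ F] {s : Set E}

theorem ae_differentiableAt_of_locallyLipschitzOn {f : E → F} (hf : LocallyLipschitzOn s f)
    (hs : IsOpen s) : ∀ᵐ x ∂μ, x ∈ s → DifferentiableAt ℝ f x := by
  rw [ae_iff]
  refine measure_null_of_locally_null _ fun x hx => ?_
  have hxs : x ∈ s := (Classical.not_imp.1 hx).1
  obtain ⟨K, t, ht, hlip⟩ := hf hxs
  rw [hs.nhdsWithin_eq hxs] at ht
  refine ⟨interior t ∩ {y | ¬(y ∈ s → DifferentiableAt ℝ f y)},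
    Filter.inter_mem (mem_nhdsWithin_of_mem_nhds (interior_mem_nhds.2 ht)) self_mem_nhdsWithin, ?_⟩
  refine measure_mono_null ?_ (ae_iff.1 (hlip.ae_differentiableWithinAt_of_mem (μ := μ)))
  rintro y ⟨hyt, hy⟩ h
  exact hy fun _ => (h (interior_subset hyt)).differentiableAt (mem_interior_iff_mem_nhds.1 hyt)

theorem ae_differentiableAt_of_concaveOn {f : E → ℝ} (hf : ConcaveOn ℝ s f) :
    ∀ᵐ x ∂μ, x ∈ s → DifferentiableAt ℝ f x := by
  filter_upwards [ae_differentiableAt_of_locallyLipschitzOn μ hf.locallyLipschitzOn_interior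
    isOpen_interior, measure_eq_zero_iff_ae_notMem.1 (hf.1.addHaar_frontier μ)] with x hx hxf hxs
  exact hx (by_contra fun hxi => hxf ⟨subset_closure hxs, hxi⟩)

end Rademacher

section Fubini

variable {α β F : Type*} [MeasurableSpace α] [MeasurableSpace β] {μ : Measure α} {ν : Measure β}
  [SFinite μ] [SFinite ν] [NormedAddCommGroup F] {s : Set (α × β)} {f : α × β → F}

theorem integrableOn_prod_of_integral_norm_section_le (hs : MeasurableSet s)
    (hf : AEStronglyMeasurable f (μ.prod ν)) {g : β → ℝ} (hg : Integrable g ν)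
    (hint : ∀ᵐ y ∂ν, IntegrableOn (fun x => f (x, y)) ((·, y) ⁻¹' s) μ)
    (hle : ∀ᵐ y ∂ν, ∫ x in (·, y) ⁻¹' s, ‖f (x, y)‖ ∂μ ≤ g y) :
    IntegrableOn f s (μ.prod ν) := by
  have hsec (y : β) : MeasurableSet ((·, y) ⁻¹' s : Set α) := measurable_prodMk_right hs
  have hfs : AEStronglyMeasurable (s.indicator f) (μ.prod ν) := hf.indicator hs
  have hnorm (y : β) :
      ∫ x, ‖s.indicator f (x, y)‖ ∂μ = ∫ x in (·, y) ⁻¹' s, ‖f (x, y)‖ ∂μ := by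
    rw [← integral_indicator (hsec y)]
    simp only [norm_indicator_eq_indicator_norm]
    rfl
  rw [← integrable_indicator_iff hs, integrable_prod_iff' hfs]
  refine ⟨hint.mono fun y hy => (integrable_indicator_iff (hsec y)).2 hy, ?_⟩
  refine hg.mono' hfs.norm.prod_swap.integral_prod_right' (hle.mono fun y hy => ?_)
  rw [Real.norm_of_nonneg (integral_nonneg fun x => norm_nonneg _), hnorm]
  exact hy

theorem setIntegral_prod_eq_integral_section [NormedSpace ℝ F] (hs : MeasurableSet s)
    (hf : IntegrableOn f s (μ.prod ν)) :
    ∫ z in s, f z ∂μ.prod ν = ∫ y, ∫ x in (·, y) ⁻¹' s, f (x, y) ∂μ ∂ν := by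
  have hsec (y : β) : MeasurableSet ((·, y) ⁻¹' s : Set α) := measurable_prodMk_right hs
  rw [← integral_indicator hs, integral_prod_symm _ ((integrable_indicator_iff hs).2 hf)]
  simp only [← integral_indicator (hsec _)]
  rfl

end Fubini

section HorizontalSection

theorem section_eq_empty {X Y : Type*} {s : Set (X × Y)} {y : Y}
    (hy : y ∉ Prod.snd '' s) : ((·, y) ⁻¹' s : Set X) = ∅ :=
  eq_empty_of_forall_notMem fun x hx => hy ⟨(x, y), hx, rfl⟩

section Topology

variable {X Y : Type*} [TopologicalSpace X] [TopologicalSpace Y] [T1Space Y] {K : Set (X × Y)}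

theorem isCompact_section (hK : IsCompact K) (y : Y) : IsCompact ((·, y) ⁻¹' K : Set X) := by
  have hrange : range ((·, y) : X → X × Y) = Prod.snd ⁻¹' {y} := by
    ext ⟨x, z⟩
    simp [eq_comm]
  exact (isInducing_prodMkLeft y).isCompact_preimage
    (hrange ▸ isClosed_singleton.preimage continuous_snd) hK

theorem exists_isGreatest_image_section {u : X × Y → ℝ} (hK : IsCompact K)
    (hu : ContinuousOn u K) {y : Y} (hy : y ∈ Prod.snd '' K) :
    ∃ M, IsGreatest (u '' {z ∈ K | z.2 = y}) M := by
  have hcompact : IsCompact {z ∈ K | z.2 = y} :=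
    hK.inter_right (isClosed_singleton.preimage continuous_snd)
  exact (hcompact.image_of_continuousOn (hu.mono (sep_subset _ _))).exists_isGreatest
    (Nonempty.image u hy)

end Topology

section Concave

variable {E : Type*} [AddCommGroup E] [Module ℝ E] {Ω : Set (ℝ × E)} {u : ℝ × E → ℝ}

theorem concaveOn_section (hu : ConcaveOn ℝ Ω u) (y : E) :
    ConcaveOn ℝ ((·, y) ⁻¹' Ω) fun x => u (x, y) :=
  hu.comp_affineMap ((AffineMap.id ℝ ℝ).prod (AffineMap.const ℝ ℝ y))

variable [TopologicalSpace E] [T1Space E]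

theorem exists_section_eq_Icc (hΩ : IsCompact Ω) (hconv : Convex ℝ Ω) {x₀ : ℝ} {y : E}
    (hx₀ : (x₀, y) ∈ Ω) :
    ∃ a b : ℝ, (·, y) ⁻¹' Ω = Icc a b ∧ (a, y) ∈ frontier Ω ∧ (b, y) ∈ frontier Ω := by
  set S : Set ℝ := (·, y) ⁻¹' Ω
  have hSconv : Convex ℝ S :=
    hconv.affine_preimage ((AffineMap.id ℝ ℝ).prod (AffineMap.const ℝ ℝ y))
  have hSIcc : S = Icc (sInf S) (sSup S) :=
    eq_Icc_of_connected_compact (hSconv.isConnected ⟨x₀, hx₀⟩) (isCompact_section hΩ y)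
  have hle : sInf S ≤ sSup S := nonempty_Icc.1 (hSIcc ▸ ⟨x₀, hx₀⟩)
  have hfrontier : {sInf S, sSup S} ⊆ (·, y) ⁻¹' frontier Ω := by
    rw [← frontier_Icc hle, ← hSIcc]
    exact Continuous.frontier_preimage_subset (by fun_prop) Ω
  exact ⟨sInf S, sSup S, hSIcc, hfrontier (by simp), hfrontier (by simp)⟩

theorem integral_abs_deriv_section (hΩ : IsCompact Ω) (hcont : ContinuousOn u Ω)
    (hconc : ConcaveOn ℝ Ω u) (hzero : ∀ z ∈ frontier Ω, u z = 0) {y : E} {M : ℝ}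
    (hM : IsGreatest (u '' {z ∈ Ω | z.2 = y}) M) :
    IntegrableOn (fun x => |deriv (fun t => u (t, y)) x|) ((·, y) ⁻¹' Ω) ∧
      ∫ x in (·, y) ⁻¹' Ω, |deriv (fun t => u (t, y)) x| = 2 * M := by
  obtain ⟨⟨⟨x₀, y'⟩, ⟨hx₀, rfl : y' = y⟩, rfl⟩, hub⟩ := hM
  obtain ⟨a, b, hsec, ha, hb⟩ := exists_section_eq_Icc hΩ hconc.1 hx₀
  have hmem {x : ℝ} : x ∈ Icc a b ↔ (x, y') ∈ Ω := by rw [← hsec, mem_preimage]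
  have hab : a ≤ b := (hmem.2 hx₀).1.trans (hmem.2 hx₀).2
  obtain ⟨hint, heq⟩ := integral_abs_deriv_of_concaveOn (f := fun x => u (x, y'))
    (hsec ▸ concaveOn_section hconc y') (hcont.comp (by fun_prop) fun x => hmem.1) (hmem.2 hx₀)
    fun x hx => hub ⟨(x, y'), ⟨hmem.1 hx, rfl⟩, rfl⟩
  rw [hsec, integral_Icc_eq_integral_Ioc, ← intervalIntegral.integral_of_le hab, heq,
    hzero _ ha, hzero _ hb]
  exact ⟨(intervalIntegrable_iff_integrableOn_Icc_of_le hab).1 hint, by ring⟩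

end Concave

variable {E : Type*} [NormedAddCommGroup E] [NormedSpace ℝ E] {Ω : Set (ℝ × E)}
  {u : ℝ × E → ℝ}

theorem deriv_section {x : ℝ} {y : E} (hu : DifferentiableAt ℝ u (x, y)) :
    deriv (fun t => u (t, y)) x = fderiv ℝ u (x, y) (1, 0) :=
  (hu.hasFDerivAt.comp_hasDerivAt x ((hasDerivAt_id x).prodMk (hasDerivAt_const x y))).deriv

variable [FiniteDimensional ℝ E] [MeasurableSpace E] [BorelSpace E] (μ : Measure E)
  [μ.IsAddHaarMeasure]

theorem ae_ae_deriv_section_eq_fderiv (hu : ConcaveOn ℝ Ω u) :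
    ∀ᵐ y ∂μ, ∀ᵐ x : ℝ, (x, y) ∈ Ω →
      deriv (fun t => u (t, y)) x = fderiv ℝ u (x, y) (1, 0) := by
  have hdiff : ∀ᵐ z ∂μ.prod volume, z.swap ∈ Ω → DifferentiableAt ℝ u z.swap :=
    Measure.measurePreserving_swap.quasiMeasurePreserving.ae
      (ae_differentiableAt_of_concaveOn (volume.prod μ) hu)
  filter_upwards [Measure.ae_ae_of_ae_prod hdiff] with y hy
  filter_upwards [hy] with x hx hxy using deriv_section (hx hxy)

theorem ae_integral_abs_fderiv_section (hΩ : IsCompact Ω) (hcont : ContinuousOn u Ω)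
    (hconc : ConcaveOn ℝ Ω u) (hzero : ∀ z ∈ frontier Ω, u z = 0) :
    ∀ᵐ y ∂μ, ∀ M, IsGreatest (u '' {z ∈ Ω | z.2 = y}) M →
      IntegrableOn (fun x => |fderiv ℝ u (x, y) (1, 0)|) ((·, y) ⁻¹' Ω) ∧
        ∫ x in (·, y) ⁻¹' Ω, |fderiv ℝ u (x, y) (1, 0)| = 2 * M := by
  filter_upwards [ae_ae_deriv_section_eq_fderiv μ hconc] with y hy M hM
  obtain ⟨hint, heq⟩ := integral_abs_deriv_section hΩ hcont hconc hzero hM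
  have hae : (fun x => |deriv (fun t => u (t, y)) x|) =ᵐ[volume.restrict ((·, y) ⁻¹' Ω)]
      fun x => |fderiv ℝ u (x, y) (1, 0)| :=
    (ae_restrict_iff' (isCompact_section hΩ y).measurableSet).2
      (hy.mono fun x hx hxy => congrArg abs (hx hxy))
  exact ⟨hint.congr hae, by rw [← integral_congr_ae hae, heq]⟩

theorem integrableOn_abs_fderiv_fst (hΩ : IsCompact Ω) (hcont : ContinuousOn u Ω)
    (hconc : ConcaveOn ℝ Ω u) (hzero : ∀ z ∈ frontier Ω, u z = 0) :
    IntegrableOn (fun z => |fderiv ℝ u z (1, 0)|) Ω (volume.prod μ) := by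
  have hmeas : Measurable fun z => |fderiv ℝ u z (1, 0)| :=
    (measurable_fderiv_apply_const ℝ u (1, 0)).abs
  obtain ⟨C, hC⟩ := hΩ.exists_bound_of_continuousOn hcont
  have hproj : IsCompact (Prod.snd '' Ω) := hΩ.image continuous_snd
  have hsection : ∀ᵐ y ∂μ,
      IntegrableOn (fun x => |fderiv ℝ u (x, y) (1, 0)|) ((·, y) ⁻¹' Ω) ∧
        ∫ x in (·, y) ⁻¹' Ω, |fderiv ℝ u (x, y) (1, 0)| ≤
          (Prod.snd '' Ω).indicator (fun _ => 2 * C) y := by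
    filter_upwards [ae_integral_abs_fderiv_section μ hΩ hcont hconc hzero] with y hy
    by_cases hyΩ : y ∈ Prod.snd '' Ω
    · obtain ⟨M, hM⟩ := exists_isGreatest_image_section hΩ hcont hyΩ
      obtain ⟨z, hz, hzM⟩ := hM.1
      have hMC : M ≤ C := hzM ▸ (le_abs_self _).trans (hC z hz.1)
      rw [(hy M hM).2, indicator_of_mem hyΩ]
      exact ⟨(hy M hM).1, by linarith⟩
    · simp [section_eq_empty hyΩ, indicator_of_notMem hyΩ]
  have hg : Integrable ((Prod.snd '' Ω).indicator fun _ => 2 * C) μ :=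
    (integrable_indicator_iff hproj.measurableSet).2 (integrableOn_const hproj.measure_lt_top.ne)
  refine integrableOn_prod_of_integral_norm_section_le hΩ.measurableSet
    hmeas.aestronglyMeasurable hg (hsection.mono fun y hy => hy.1) (hsection.mono fun y hy => ?_)
  simpa only [Real.norm_eq_abs, abs_abs] using hy.2

theorem stmt_1_general (hΩ : IsCompact Ω) (hcont : ContinuousOn u Ω)
    (hconc : ConcaveOn ℝ Ω u) (hzero : ∀ z ∈ frontier Ω, u z = 0) {m : E → ℝ}
    (hm : ∀ y ∈ Prod.snd '' Ω, IsGreatest (u '' {z ∈ Ω | z.2 = y}) (m y)) :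
    ∫ z in Ω, |fderiv ℝ u z (1, 0)| ∂volume.prod μ = ∫ y in Prod.snd '' Ω, 2 * m y ∂μ := by
  rw [setIntegral_prod_eq_integral_section hΩ.measurableSet
      (integrableOn_abs_fderiv_fst μ hΩ hcont hconc hzero),
    ← integral_indicator (hΩ.image continuous_snd).measurableSet]
  refine integral_congr_ae ?_
  filter_upwards [ae_integral_abs_fderiv_section μ hΩ hcont hconc hzero] with y hy
  by_cases hyΩ : y ∈ Prod.snd '' Ω
  · rw [indicator_of_mem hyΩ, (hy _ (hm y hyΩ)).2]
  · rw [indicator_of_notMem hyΩ, section_eq_empty hyΩ, setIntegral_empty]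

end HorizontalSection

/-- Proposition 1: `‖u_x‖₁ = ∫_c^d 2 m(y) dy`, where `[c,d]` is the
projection of `Ω` to the `y`-axis and `m(y)` is the maximum of `u` on the horizontal
section of `Ω` at height `y`. -/
theorem stmt_1 (Ω : Set (ℝ × ℝ)) (hΩc : IsCompact Ω) (hΩconv : Convex ℝ Ω)
    (hΩint : (interior Ω).Nonempty)
    (u : ℝ × ℝ → ℝ) (hu : MemU Ω u)
    (c d : ℝ) (hproj : (fun z : ℝ × ℝ => z.2) '' Ω = Icc c d)
    (m : ℝ → ℝ) (hm : ∀ y ∈ Icc c d, IsGreatest (u '' {z ∈ Ω | z.2 = y}) (m y)) :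
    L1N Ω (ux u) = ∫ y in c..d, 2 * m y := by
  have hcd : c ≤ d := nonempty_Icc.1 (hproj ▸ (hΩint.mono interior_subset).image _)
  rw [intervalIntegral.integral_of_le hcd, ← integral_Icc_eq_integral_Ioc, ← hproj]
  exact stmt_1_general volume hΩc hu.1 hu.2.1 hu.2.2.1 (hproj ▸ hm)
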